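/- arXiv:1611.07214 — 2 statements merged into one kernel-verified Lean document; each statement's English description precedes it below -/
import Mathlib

section
/- Entropy interchange formula: Let T be a rooted tree with no infinite geodesic, no vertex with exactly one successor, nonempty boundary, length function ℓ, and P a fully supported probability measure on ∂T with ℓ(P) < ∞. If the entropy H(P) = ∑_{v∈∂T} P(v)·log₂(1/P(v)) is finite, then the local entropy H_p(x) = ∑_{y∈N(x)} p(y|x)·log₂(1/p(y|x)) is finite for every interior node x, and H(P)/ℓ(P) = ∑_{x ∈ interior T} μ_P(x)·H_p(x)/ℓ(x). -/
open scoped BigOperators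
open Filter

noncomputable section

/-- The entropy function `φ(t) = t·log₂(1/t)` (which vanishes at `t = 0`). -/
def phi (t : ℝ) : ℝ := t * Real.logb 2 (1 / t)

/-- A rooted tree: a set of finite lists over ℕ containing the empty list (the root)
and closed under taking prefixes. -/
def IsTree (T : Set (List ℕ)) : Prop :=
  ([] : List ℕ) ∈ T ∧ ∀ x ∈ T, ∀ y : List ℕ, y <+: x → y ∈ T

/-- The successors of `x` in `T`: one-entry extensions of `x` lying in `T`. -/
def succs (T : Set (List ℕ)) (x : List ℕ) : Set (List ℕ) :=
  {y | y ∈ T ∧ ∃ n : ℕ, y = x ++ [n]}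

/-- `x` is a leaf of `T`. -/
def IsLeaf (T : Set (List ℕ)) (x : List ℕ) : Prop :=
  x ∈ T ∧ succs T x = ∅

/-- The boundary of `T`: its set of leaves. -/
def bdry (T : Set (List ℕ)) : Set (List ℕ) := {x | IsLeaf T x}

/-- The interior of `T`. -/
def intr (T : Set (List ℕ)) : Set (List ℕ) := T \ bdry T

/-- No vertex has exactly one successor. -/
def NoUnary (T : Set (List ℕ)) : Prop :=
  ∀ x ∈ T, ∀ y : List ℕ, succs T x ≠ {y}

/-- `T` has no infinite geodesic. -/
def NoInfGeo (T : Set (List ℕ)) : Prop :=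
  ¬ ∃ ξ : ℕ → ℕ, ∀ n : ℕ, (List.ofFn fun i : Fin n => ξ i) ∈ T

/-- `∂T_x`: the set of leaves having `x` as a prefix. -/
def cone (T : Set (List ℕ)) (x : List ℕ) : Set (List ℕ) :=
  {v | v ∈ bdry T ∧ x <+: v}

/-- `P(∂T_x)`. -/
def mass (T : Set (List ℕ)) (P : List ℕ → ℝ) (x : List ℕ) : ℝ :=
  ∑' v : cone T x, P v

/-- `|x|_ℓ`: the sum of `ℓ(y)` over the proper prefixes `y` of `x`. -/
def lenWt (ℓ : List ℕ → ℝ) (x : List ℕ) : ℝ :=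
  ∑ i ∈ Finset.range x.length, ℓ (x.take i)

/-- Expected length `ℓ(P)`. -/
def expLen (T : Set (List ℕ)) (ℓ P : List ℕ → ℝ) : ℝ :=
  ∑' v : bdry T, lenWt ℓ v * P v

/-- Forward transition probability `p(y|x) = P(∂T_y)/P(∂T_x)`. -/
def fwd (T : Set (List ℕ)) (P : List ℕ → ℝ) (x y : List ℕ) : ℝ :=
  mass T P y / mass T P x

/-- Node-average measure `μ_P(x) = ℓ(x)·P(∂T_x)/ℓ(P)`. -/
def nodeAvg (T : Set (List ℕ)) (ℓ P : List ℕ → ℝ) (x : List ℕ) : ℝ :=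
  ℓ x * mass T P x / expLen T ℓ P

/-- A (fully supported) probability measure on a set `S` of vertices. -/
def IsProbOn (S : Set (List ℕ)) (P : List ℕ → ℝ) : Prop :=
  (∀ v ∈ S, 0 < P v) ∧ HasSum (fun v : S => P v) 1

/-- The local entropy `H_p(x) = ∑_{y∈N(x)} φ(p(y|x))` at an interior node `x`. -/
def Hloc (T : Set (List ℕ)) (P : List ℕ → ℝ) (x : List ℕ) : ℝ :=
  ∑' y : succs T x, phi (fwd T P x y)

/-!
Let `m x = P(∂T_x)`, so that `p(y|x) = m y / m x`. Along the geodesic from the root to a leaf `v`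
the information contents `log₂ (1 / p(y|x))` of the successive transitions telescope to
`log₂ (1 / P v)`. Hence `H(P)` is the sum over all leaves `v` and all interior vertices `x` above
`v` of `P v` times the information content of the transition out of `x` towards `v`. All terms are
nonnegative, so one may sum over the leaves below a fixed `x` first; grouping these by the
successor of `x` they lie below yields `m x * H_p(x)`. Therefore `H(P) = ∑ x, m x * H_p(x)`, and
dividing by `ℓ(P)` gives the formula.
-/

lemma exists_forall_ofFn_isPrefix {α : Type*} {s : ℕ → List α} (hs : ∀ k, s k <+: s (k + 1))
    (hlen : ∀ k, k ≤ (s k).length) :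
    ∃ ξ : ℕ → α, ∀ n, (List.ofFn fun i : Fin n => ξ i) <+: s n := by
  have hmono : ∀ {m n}, m ≤ n → s m <+: s n :=
    fun h => Nat.rel_of_forall_rel_succ_of_le (· <+: ·) hs h
  refine ⟨fun i => (s (i + 1))[i]'(hlen (i + 1)), fun n => ?_⟩
  suffices h : (List.ofFn fun i : Fin n => (s (i + 1))[(i : ℕ)]'(hlen (i + 1))) = (s n).take n from
    h ▸ List.take_prefix n (s n)
  refine List.ext_getElem (by simp [hlen n]) fun i hi _ => ?_
  have hin : i + 1 ≤ n := by simpa using hi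
  simpa only [List.getElem_ofFn, List.getElem_take] using (hmono hin).getElem (hlen (i + 1))

section Tree

variable {T : Set (List ℕ)} {x y v w : List ℕ} {i : ℕ}

lemma length_of_mem_succs (hy : y ∈ succs T x) : y.length = x.length + 1 := by
  obtain ⟨-, n, rfl⟩ := hy
  simp

lemma isPrefix_of_mem_succs (hy : y ∈ succs T x) : x <+: y := by
  obtain ⟨-, n, rfl⟩ := hy
  exact List.prefix_append x [n]

lemma take_eq_of_mem_succs (hy : y ∈ succs T x) (hyv : y <+: v) :
    v.take (x.length + 1) = y := by
  rw [← length_of_mem_succs hy, ← List.prefix_iff_eq_take.mp hyv]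

lemma IsTree.take_mem (hT : IsTree T) (hv : v ∈ T) (i : ℕ) : v.take i ∈ T :=
  hT.2 v hv _ (List.take_prefix i v)

lemma IsTree.take_succ_mem_succs (hT : IsTree T) (hv : v ∈ T) (hi : i < v.length) :
    v.take (i + 1) ∈ succs T (v.take i) :=
  ⟨hT.take_mem hv (i + 1), v[i], by simp⟩

lemma IsTree.take_mem_intr (hT : IsTree T) (hv : v ∈ T) (hi : i < v.length) :
    v.take i ∈ intr T :=
  ⟨hT.take_mem hv i, fun h => (h.2 ▸ hT.take_succ_mem_succs hv hi : _ ∈ (∅ : Set (List ℕ)))⟩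

lemma IsTree.eq_of_mem_bdry_of_isPrefix (hT : IsTree T) (hv : v ∈ bdry T) (hw : w ∈ T)
    (hvw : v <+: w) : v = w := by
  refine hvw.eq_of_length_le (not_lt.mp fun hlt => ?_)
  have hint := hT.take_mem_intr hw hlt
  rw [← List.prefix_iff_eq_take.mp hvw] at hint
  exact hint.2 hv

lemma length_lt_of_mem_cone (hx : x ∈ intr T) (hv : v ∈ cone T x) : x.length < v.length := by
  refine hv.2.length_le.lt_of_ne fun hlen => hx.2 ?_
  rw [hv.2.eq_of_length hlen]
  exact hv.1

lemma cone_subset_bdry : cone T x ⊆ bdry T := fun _ hv => hv.1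

lemma cone_subset_cone (hxy : x <+: y) : cone T y ⊆ cone T x :=
  fun _ hv => ⟨hv.1, hxy.trans hv.2⟩

lemma cone_nil : cone T [] = bdry T := by
  simp [cone]

lemma IsTree.cone_eq_singleton (hT : IsTree T) (hv : v ∈ bdry T) : cone T v = {v} := by
  ext w
  constructor
  · exact fun hw => (hT.eq_of_mem_bdry_of_isPrefix hv hw.1.1 hw.2).symm
  · rintro rfl
    exact ⟨hv, List.prefix_rfl⟩

lemma NoInfGeo.wellFounded_succs (hG : NoInfGeo T) (hT : IsTree T) :
    WellFounded fun y x => y ∈ succs T x := by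
  refine wellFounded_iff_isEmpty_descending_chain.mpr ⟨fun ⟨s, hs⟩ => hG ?_⟩
  have hlen : ∀ k, k ≤ (s k).length := by
    intro k
    induction k with
    | zero => exact Nat.zero_le _
    | succ k ih => exact length_of_mem_succs (hs k) ▸ Nat.succ_le_succ ih
  obtain ⟨ξ, hξ⟩ := exists_forall_ofFn_isPrefix (fun k => isPrefix_of_mem_succs (hs k)) hlen
  exact ⟨ξ, fun n => hT.2 _ (hs n).1 _ ((hξ n).trans (isPrefix_of_mem_succs (hs n)))⟩

lemma NoInfGeo.cone_nonempty (hG : NoInfGeo T) (hT : IsTree T) (hx : x ∈ T) :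
    (cone T x).Nonempty := by
  induction x using (hG.wellFounded_succs hT).induction with
  | _ x ih =>
    obtain hleaf | ⟨y, hy⟩ := (succs T x).eq_empty_or_nonempty
    · exact ⟨x, ⟨hx, hleaf⟩, List.prefix_rfl⟩
    · exact (ih y hy hy.1).mono (cone_subset_cone (isPrefix_of_mem_succs hy))

/-- The incidences between leaves and interior vertices above them: the interior vertices above a
leaf `v` are its truncations to lengths `i < v.length`. -/
def IsTree.incidenceEquiv (hT : IsTree T) :
    (Σ v : bdry T, Fin v.1.length) ≃ Σ x : intr T, cone T x where
  toFun p := ⟨⟨p.1.1.take p.2, hT.take_mem_intr p.1.2.1 p.2.2⟩, p.1.1, p.1.2, List.take_prefix _ _⟩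
  invFun q := ⟨⟨q.2, q.2.2.1⟩, q.1.1.length, length_lt_of_mem_cone q.1.2 q.2.2⟩
  left_inv := by
    rintro ⟨⟨v, hv⟩, i, hi⟩
    refine Sigma.ext rfl (heq_of_eq (Fin.ext ?_))
    simpa using (show i < v.length from hi).le
  right_inv := by
    rintro ⟨⟨x, hx⟩, v, hv⟩
    exact Sigma.subtype_ext (Subtype.ext (List.prefix_iff_eq_take.mp hv.2).symm) rfl

/-- The leaves below an interior vertex `x`, grouped by the successor of `x` they lie below. -/
def IsTree.coneEquiv (hT : IsTree T) (hx : x ∈ intr T) :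
    (Σ y : succs T x, cone T y) ≃ cone T x where
  toFun p := ⟨p.2, cone_subset_cone (isPrefix_of_mem_succs p.1.2) p.2.2⟩
  invFun v := ⟨⟨v.1.take (x.length + 1), by
      have hmem := hT.take_succ_mem_succs v.2.1.1 (length_lt_of_mem_cone hx v.2)
      rwa [← List.prefix_iff_eq_take.mp v.2.2] at hmem⟩,
    v.1, v.2.1, List.take_prefix _ _⟩
  left_inv := by
    rintro ⟨⟨y, hy⟩, v, hv⟩
    obtain rfl : v.take (x.length + 1) = y := take_eq_of_mem_succs hy hv.2
    rfl
  right_inv _ := rfl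

lemma IsTree.apply_nil_le_lenWt {ℓ : List ℕ → ℝ} (hT : IsTree T) (hℓ : ∀ x ∈ intr T, 0 ≤ ℓ x)
    (hv : v ∈ T) (hne : v ≠ []) : ℓ [] ≤ lenWt ℓ v :=
  Finset.single_le_sum (f := fun i => ℓ (v.take i))
    (fun _ hi => hℓ _ (hT.take_mem_intr hv (Finset.mem_range.mp hi)))
    (Finset.mem_range.mpr (List.length_pos_iff.mpr hne))

end Tree

section Mass

variable {T : Set (List ℕ)} {P : List ℕ → ℝ} {x y v : List ℕ}

lemma summable_cone (hs : Summable fun v : bdry T => P v) (x : List ℕ) :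
    Summable fun v : cone T x => P v :=
  hs.comp_injective (i := Set.inclusion cone_subset_bdry) (Set.inclusion_injective _)

lemma mass_nil : mass T P [] = ∑' v : bdry T, P v := by
  rw [mass, cone_nil]

lemma IsTree.mass_of_mem_bdry (hT : IsTree T) (hv : v ∈ bdry T) : mass T P v = P v := by
  rw [mass, hT.cone_eq_singleton hv, tsum_singleton]

lemma mass_nonneg (hP : ∀ v ∈ bdry T, 0 ≤ P v) (x : List ℕ) : 0 ≤ mass T P x :=
  tsum_nonneg fun v => hP v v.2.1

lemma mass_le_mass (hP : ∀ v ∈ bdry T, 0 ≤ P v) (hs : Summable fun v : bdry T => P v)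
    (hxy : x <+: y) : mass T P y ≤ mass T P x :=
  (summable_cone hs y).tsum_le_tsum_of_inj (Set.inclusion (cone_subset_cone hxy))
    (Set.inclusion_injective _) (fun v _ => hP v v.2.1) (fun _ => le_rfl) (summable_cone hs x)

lemma mass_pos (hP : ∀ v ∈ bdry T, 0 < P v) (hs : Summable fun v : bdry T => P v)
    (hx : (cone T x).Nonempty) : 0 < mass T P x := by
  obtain ⟨v, hv⟩ := hx
  exact (summable_cone hs x).tsum_pos (fun w => (hP w w.2.1).le) ⟨v, hv⟩ (hP v hv.1)

lemma mass_mul_fwd (hP : ∀ v ∈ bdry T, 0 ≤ P v) (hs : Summable fun v : bdry T => P v)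
    (hxy : x <+: y) : mass T P x * fwd T P x y = mass T P y :=
  mul_div_cancel_of_imp' fun hx =>
    le_antisymm (hx ▸ mass_le_mass hP hs hxy) (mass_nonneg hP y)

lemma IsTree.expLen_pos {ℓ : List ℕ → ℝ} (hT : IsTree T) (hroot : [] ∈ intr T)
    (hℓ : ∀ x ∈ intr T, 0 < ℓ x) (hP : ∀ v ∈ bdry T, 0 ≤ P v)
    (hP₁ : HasSum (fun v : bdry T => P v) 1) (hlen : Summable fun v : bdry T => lenWt ℓ v * P v) :
    0 < expLen T ℓ P := by
  have hle : ∀ v : bdry T, ℓ [] * P v ≤ lenWt ℓ v * P v := fun v =>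
    mul_le_mul_of_nonneg_right (hT.apply_nil_le_lenWt (fun x hx => (hℓ x hx).le) v.2.1
      fun hv => hroot.2 (hv ▸ v.2)) (hP v v.2)
  calc 0 < ℓ [] * 1 := by simpa using hℓ [] hroot
    _ ≤ expLen T ℓ P := hasSum_le hle (hP₁.mul_left _) hlen.hasSum

end Mass

section Entropy

variable {T : Set (List ℕ)} {P : List ℕ → ℝ} {x v : List ℕ}

/-- The information content `log₂ (1 / p(y|x))` of the transition from `x` to its successor `y` on
the way to `v`, encoded as the truncation of `v` to length `|x| + 1`. -/
def stepInfo (T : Set (List ℕ)) (P : List ℕ → ℝ) (x v : List ℕ) : ℝ :=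
  Real.logb 2 (1 / fwd T P x (v.take (x.length + 1)))

lemma stepInfo_nonneg (hP : ∀ v ∈ bdry T, 0 ≤ P v) (hs : Summable fun v : bdry T => P v)
    (hxv : x <+: v) : 0 ≤ stepInfo T P x v := by
  have hxy : x <+: v.take (x.length + 1) :=
    List.prefix_take_iff.mpr ⟨hxv, Nat.le_succ _⟩
  rw [stepInfo, one_div, Real.logb_inv, neg_nonneg]
  exact Real.logb_nonpos one_lt_two (div_nonneg (mass_nonneg hP _) (mass_nonneg hP _))
    (div_le_one_of_le₀ (mass_le_mass hP hs hxy) (mass_nonneg hP _))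

lemma sum_stepInfo (hP : ∀ v ∈ bdry T, 0 ≤ P v) (hs : Summable fun v : bdry T => P v)
    (hv : 0 < mass T P v) :
    ∑ i ∈ Finset.range v.length, stepInfo T P (v.take i) v
      = Real.logb 2 (mass T P [] / mass T P v) := by
  have hne : ∀ i, mass T P (v.take i) ≠ 0 := fun i =>
    (hv.trans_le (mass_le_mass hP hs (List.take_prefix i v))).ne'
  have hstep : ∀ i ∈ Finset.range v.length, stepInfo T P (v.take i) v
      = Real.logb 2 (mass T P (v.take i)) - Real.logb 2 (mass T P (v.take (i + 1))) := by
    intro i hi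
    rw [stepInfo, List.length_take_of_le (Finset.mem_range.mp hi).le, fwd, one_div_div,
      Real.logb_div (hne _) (hne _)]
  rw [Finset.sum_congr rfl hstep, Finset.sum_range_sub', List.take_zero, List.take_length,
    ← Real.logb_div (by simpa using hne 0) hv.ne']

lemma IsTree.sum_mul_stepInfo (hT : IsTree T) (hP : ∀ v ∈ bdry T, 0 ≤ P v)
    (hP₁ : HasSum (fun v : bdry T => P v) 1) (hv : v ∈ bdry T) :
    ∑ i : Fin v.length, P v * stepInfo T P (v.take i) v = phi (P v) := by
  rw [← Finset.mul_sum, Fin.sum_univ_eq_sum_range fun i => stepInfo T P (v.take i) v]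
  obtain hzero | hpos := (hP v hv).eq_or_lt
  · simp [phi, ← hzero]
  · have hmass : mass T P v = P v := hT.mass_of_mem_bdry hv
    rw [sum_stepInfo hP hP₁.summable (hmass ▸ hpos), mass_nil, hP₁.tsum_eq, hmass, phi]

lemma IsTree.hasSum_mul_stepInfo (hT : IsTree T) (hP : ∀ v ∈ bdry T, 0 ≤ P v)
    (hP₁ : HasSum (fun v : bdry T => P v) 1) (hH : Summable fun v : bdry T => phi (P v)) :
    HasSum (fun q : Σ x : intr T, cone T x => P q.2 * stepInfo T P q.1 q.2)
      (∑' v : bdry T, phi (P v)) := by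
  rw [← hT.incidenceEquiv.hasSum_iff]
  have hfiber : ∀ v : bdry T,
      HasSum (fun i : Fin v.1.length => P v * stepInfo T P (v.1.take i) v) (phi (P v)) :=
    fun v => hT.sum_mul_stepInfo hP hP₁ v.2 ▸ hasSum_fintype _
  refine HasSum.sigma_of_hasSum hH.hasSum hfiber ((summable_sigma_of_nonneg fun p => ?_).mpr
    ⟨fun v => (hfiber v).summable, hH.congr fun v => (hfiber v).tsum_eq.symm⟩)
  exact mul_nonneg (hP _ p.1.2) (stepInfo_nonneg hP hP₁.summable (List.take_prefix _ _))

lemma IsTree.hasSum_mass_mul_phi_fwd (hT : IsTree T) (hP : ∀ v ∈ bdry T, 0 ≤ P v)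
    (hs : Summable fun v : bdry T => P v) (hx : x ∈ intr T)
    (hx_sum : Summable fun v : cone T x => P v * stepInfo T P x v) :
    HasSum (fun y : succs T x => mass T P x * phi (fwd T P x y))
      (∑' v : cone T x, P v * stepInfo T P x v) := by
  refine ((hT.coneEquiv hx).hasSum_iff.mpr hx_sum.hasSum).sigma fun y => ?_
  have hinfo : ∀ v : cone T y, stepInfo T P x v = Real.logb 2 (1 / fwd T P x y) :=
    fun v => by rw [stepInfo, take_eq_of_mem_succs y.2 v.2.2]
  have hmass : mass T P y * Real.logb 2 (1 / fwd T P x y) = mass T P x * phi (fwd T P x y) := by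
    rw [phi, ← mul_assoc, mass_mul_fwd hP hs (isPrefix_of_mem_succs y.2)]
  rw [← hmass]
  exact ((summable_cone hs y).hasSum.mul_right _).congr_fun fun v => by
    simp [IsTree.coneEquiv, hinfo]

lemma IsTree.summable_phi_fwd (hT : IsTree T) (hP : ∀ v ∈ bdry T, 0 ≤ P v)
    (hP₁ : HasSum (fun v : bdry T => P v) 1) (hH : Summable fun v : bdry T => phi (P v))
    (hx : x ∈ intr T) (hmass : 0 < mass T P x) :
    Summable fun y : succs T x => phi (fwd T P x y) := by
  have hx_sum := (hT.hasSum_mul_stepInfo hP hP₁ hH).summable.sigma_factor ⟨x, hx⟩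
  exact (summable_mul_left_iff hmass.ne').mp
    (hT.hasSum_mass_mul_phi_fwd hP hP₁.summable hx hx_sum).summable

lemma IsTree.hasSum_mass_mul_Hloc (hT : IsTree T) (hP : ∀ v ∈ bdry T, 0 ≤ P v)
    (hP₁ : HasSum (fun v : bdry T => P v) 1) (hH : Summable fun v : bdry T => phi (P v)) :
    HasSum (fun x : intr T => mass T P x * Hloc T P x) (∑' v : bdry T, phi (P v)) := by
  have hsum := hT.hasSum_mul_stepInfo hP hP₁ hH
  refine hsum.sigma fun x => ?_
  have hx_sum := hsum.summable.sigma_factor x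
  rw [Hloc, ← tsum_mul_left, (hT.hasSum_mass_mul_phi_fwd hP hP₁.summable x.2 hx_sum).tsum_eq]
  exact hx_sum.hasSum

end Entropy

/-- At a vertex `x` of mass zero the value `p(y|x)` is `0 / 0 = 0`; such an `x` does not affect the
sum, since `μ_P(x) = 0`. -/
theorem entropy_interchange_general {T : Set (List ℕ)} (hT : IsTree T) (hroot : [] ∈ intr T)
    {ℓ : List ℕ → ℝ} (hℓ : ∀ x ∈ intr T, 0 < ℓ x) {P : List ℕ → ℝ} (hP : ∀ v ∈ bdry T, 0 ≤ P v)
    (hP₁ : HasSum (fun v : bdry T => P v) 1) (hlen : Summable fun v : bdry T => lenWt ℓ v * P v)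
    (hH : Summable fun v : bdry T => phi (P v)) :
    (∀ x ∈ intr T, 0 < mass T P x → Summable fun y : succs T x => phi (fwd T P x y)) ∧
    0 < expLen T ℓ P ∧
    HasSum (fun x : intr T => nodeAvg T ℓ P x * (Hloc T P x / ℓ x))
      ((∑' v : bdry T, phi (P v)) / expLen T ℓ P) := by
  refine ⟨fun x => hT.summable_phi_fwd hP hP₁ hH, hT.expLen_pos hroot hℓ hP hP₁ hlen, ?_⟩
  refine ((hT.hasSum_mass_mul_Hloc hP hP₁ hH).div_const (expLen T ℓ P)).congr_fun fun x => ?_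
  have hℓx : ℓ x ≠ 0 := (hℓ x x.2).ne'
  rw [nodeAvg]
  field_simp

/-- Entropy interchange formula: if `H(P)` is finite then all local entropies are finite and
`H(P)/ℓ(P) = ∑_{x ∈ interior T} μ_P(x)·H_p(x)/ℓ(x)`. -/
theorem entropy_interchange
    (T : Set (List ℕ)) (hT : IsTree T) (hU : NoUnary T) (hG : NoInfGeo T)
    (hB : (bdry T).Nonempty) (hroot : ([] : List ℕ) ∈ intr T)
    (ℓ : List ℕ → ℝ) (hℓ : ∀ x ∈ intr T, 0 < ℓ x)
    (P : List ℕ → ℝ) (hP : IsProbOn (bdry T) P)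
    (hlen : Summable fun v : bdry T => lenWt ℓ v * P v)
    (hH : Summable fun v : bdry T => phi (P v)) :
    (∀ x ∈ intr T, Summable fun y : succs T x => phi (fwd T P x y)) ∧
    (∑' v : bdry T, phi (P v)) / expLen T ℓ P
      = ∑' x : intr T, nodeAvg T ℓ P x * (Hloc T P x / ℓ x) := by
  obtain ⟨hloc, -, hsum⟩ := entropy_interchange_general hT hroot hℓ (fun v hv => (hP.1 v hv).le)
    hP.2 hlen hH
  exact ⟨fun x hx => hloc x hx (mass_pos hP.1 hP.2.summable (hG.cone_nonempty hT hx.1)),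
    hsum.tsum_eq.symm⟩
end
end

section
/- Local entropy comparison lemma: Let p and q be probability distributions on a countable set Y whose entropies ∑_{y} φ(p(y)) and ∑_{y} φ(q(y)) are finite, where φ(t) = t·log₂(1/t), φ(0) = 0. Suppose ε > 0 and there is a finite subset F ⊆ Y with |F| ≤ M such that ∑_{y ∈ Y\F} φ(p(y)) < ε and ∑_{y ∈ Y\F} φ(q(y)) < ε. Then for every δ with 0 < δ ≤ 1/2, |∑_{y} φ(p(y)) − ∑_{y} φ(q(y))| ≤ 2ε + M·φ(δ) + (2/(e·ln 2))·(1/δ)·∑_{y∈Y} |p(y) − q(y)|. -/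
/-!
Write `η(x) = -x ln x = φ(x) ln 2`. On `F` the comparison is pointwise: for `0 ≤ x ≤ y ≤ 1`,
concavity gives both `η(x) - η(y) ≤ y - x` and, by subadditivity, `η(y) - η(x) ≤ η(y - x)`.
The tangent to `η` at `δ / 2` lies above `η`, so
`η(y - x) ≤ δ / 2 + (ln (2 / δ) - 1) (y - x)`. Its intercept is at most `η(δ)` because
`ln (1 / δ) ≥ 1 / 2`, and its slope is at most `2 / (e δ)` because `ln t ≤ t / e`. The
contributions of the complement of `F` both lie in `[0, ε]`, so they differ by at most `ε`.
-/

noncomputable section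

section NegMulLog

open Real

lemma log_le_div_exp_one {x : ℝ} (hx : 0 < x) : log x ≤ x / exp 1 := by
  rw [le_div_iff₀' (exp_pos 1)]
  calc exp 1 * log x ≤ exp (log x) := exp_one_mul_le_exp
    _ = x := exp_log hx

lemma negMulLog_le_tangent {s x : ℝ} (hs : 0 < s) (hx : 0 ≤ x) :
    negMulLog x ≤ s - x - x * log s :=
  calc negMulLog x = s * negMulLog (x / s) + x / s * negMulLog s := by
        rw [← negMulLog_mul, div_mul_cancel₀ x hs.ne']
    _ ≤ s * (1 - x / s) + x / s * negMulLog s := by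
        gcongr
        exact negMulLog_le_one_sub_self (by positivity)
    _ = s - x - x * log s := by
        rw [negMulLog]
        field_simp
        ring

lemma mul_log_le_mul_log {x y : ℝ} (hx : 0 ≤ x) (hxy : x ≤ y) : x * log x ≤ x * log y := by
  obtain rfl | hx_pos := hx.eq_or_lt
  · simp
  · gcongr

lemma negMulLog_add_le {x y : ℝ} (hx : 0 ≤ x) (hy : 0 ≤ y) :
    negMulLog (x + y) ≤ negMulLog x + negMulLog y := by
  have hlog_x : x * log x ≤ x * log (x + y) := mul_log_le_mul_log hx (by linarith)
  have hlog_y : y * log y ≤ y * log (x + y) := mul_log_le_mul_log hy (by linarith)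
  simp only [negMulLog]
  linarith

lemma negMulLog_sub_negMulLog_le_sub {x y : ℝ} (hx : 0 ≤ x) (hxy : x ≤ y) (hy : y ≤ 1) :
    negMulLog x - negMulLog y ≤ y - x := by
  obtain rfl | hy_pos := (hx.trans hxy).eq_or_lt
  · simp [le_antisymm hxy hx]
  have htangent : negMulLog x ≤ y - x - x * log y := negMulLog_le_tangent hy_pos hx
  have hslope : (y - x) * log y ≤ 0 :=
    mul_nonpos_of_nonneg_of_nonpos (sub_nonneg.2 hxy) (log_nonpos hy_pos.le hy)
  calc negMulLog x - negMulLog y ≤ y - x - x * log y - -y * log y := sub_le_sub_right htangent _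
    _ = y - x + (y - x) * log y := by ring
    _ ≤ y - x := add_le_of_nonpos_right hslope

lemma log_two_sub_log_le {δ : ℝ} (hδ : 0 < δ) : log 2 - log δ ≤ 2 / (exp 1 * δ) := by
  rw [← log_div two_ne_zero hδ.ne', mul_comm, ← div_div]
  exact log_le_div_exp_one (by positivity)

lemma negMulLog_le_negMulLog_add {δ t : ℝ} (hδ₀ : 0 < δ) (hδ : δ ≤ exp (-1 / 2)) (ht : 0 ≤ t) :
    negMulLog t ≤ negMulLog δ + 2 / (exp 1 * δ) * t := by
  have hlogδ : log δ ≤ -1 / 2 := (log_le_iff_le_exp hδ₀).2 hδ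
  have hintercept : δ / 2 ≤ negMulLog δ :=
    calc δ / 2 = -δ * (-1 / 2) := by ring
      _ ≤ -δ * log δ := mul_le_mul_of_nonpos_left hlogδ (by linarith)
  calc negMulLog t ≤ δ / 2 - t - t * log (δ / 2) := negMulLog_le_tangent (by positivity) ht
    _ = δ / 2 + (log 2 - log δ) * t - t := by
        rw [log_div hδ₀.ne' two_ne_zero]
        ring
    _ ≤ negMulLog δ + 2 / (exp 1 * δ) * t - 0 := by
        gcongr
        exact log_two_sub_log_le hδ₀
    _ = negMulLog δ + 2 / (exp 1 * δ) * t := sub_zero _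

lemma one_le_two_div_exp_one_mul {δ : ℝ} (hδ₀ : 0 < δ) (hδ : δ ≤ exp (-1 / 2)) :
    1 ≤ 2 / (exp 1 * δ) := by
  linarith [(log_le_iff_le_exp hδ₀).2 hδ, log_two_gt_d9, log_two_sub_log_le hδ₀]

lemma abs_negMulLog_sub_negMulLog_le {x y δ : ℝ} (hx : x ∈ Set.Icc 0 1) (hy : y ∈ Set.Icc 0 1)
    (hδ₀ : 0 < δ) (hδ : δ ≤ exp (-1 / 2)) :
    |negMulLog x - negMulLog y| ≤ negMulLog δ + 2 / (exp 1 * δ) * |x - y| := by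
  wlog hxy : x ≤ y generalizing x y
  · rw [abs_sub_comm, abs_sub_comm x]
    exact this hy hx (le_of_not_ge hxy)
  have hd : 0 ≤ y - x := sub_nonneg.2 hxy
  rw [abs_sub_comm x, abs_of_nonneg hd, abs_sub_le_iff]
  constructor
  · have hδ_nonneg : 0 ≤ negMulLog δ :=
      negMulLog_nonneg hδ₀.le (hδ.trans (exp_le_one_iff.2 (by norm_num)))
    calc negMulLog x - negMulLog y ≤ 0 + 1 * (y - x) := by
          simpa using negMulLog_sub_negMulLog_le_sub hx.1 hxy hy.2
      _ ≤ negMulLog δ + 2 / (exp 1 * δ) * (y - x) := by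
          gcongr
          exact one_le_two_div_exp_one_mul hδ₀ hδ
  · calc negMulLog y - negMulLog x ≤ negMulLog (y - x) := by
          rw [sub_le_iff_le_add']
          simpa only [add_sub_cancel] using negMulLog_add_le hx.1 hd
      _ ≤ negMulLog δ + 2 / (exp 1 * δ) * (y - x) := negMulLog_le_negMulLog_add hδ₀ hδ hd

end NegMulLog

lemma phi_eq_negMulLog_div (t : ℝ) : phi t = Real.negMulLog t / Real.log 2 := by
  rw [phi, Real.negMulLog, one_div, Real.logb, Real.log_inv]
  ring

lemma phi_nonneg {t : ℝ} (ht : t ∈ Set.Icc 0 1) : 0 ≤ phi t := by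
  rw [phi_eq_negMulLog_div]
  exact div_nonneg (Real.negMulLog_nonneg ht.1 ht.2) (Real.log_nonneg one_le_two)

lemma abs_phi_sub_phi_le {x y δ : ℝ} (hx : x ∈ Set.Icc 0 1) (hy : y ∈ Set.Icc 0 1)
    (hδ₀ : 0 < δ) (hδ : δ ≤ Real.exp (-1 / 2)) :
    |phi x - phi y| ≤ phi δ + 2 / (Real.exp 1 * Real.log 2) * (1 / δ) * |x - y| := by
  have hlog : 0 < Real.log 2 := Real.log_pos one_lt_two
  simp only [phi_eq_negMulLog_div]
  rw [← sub_div, abs_div, abs_of_pos hlog, div_le_iff₀ hlog]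
  calc |Real.negMulLog x - Real.negMulLog y|
      ≤ Real.negMulLog δ + 2 / (Real.exp 1 * δ) * |x - y| :=
        abs_negMulLog_sub_negMulLog_le hx hy hδ₀ hδ
    _ = _ := by field_simp

lemma abs_sum_phi_sub_sum_phi_le {ι : Type*} {p q : ι → ℝ} {s : Finset ι} {δ : ℝ}
    (hp : ∀ i ∈ s, p i ∈ Set.Icc 0 1) (hq : ∀ i ∈ s, q i ∈ Set.Icc 0 1)
    (hδ₀ : 0 < δ) (hδ : δ ≤ Real.exp (-1 / 2)) :
    |∑ i ∈ s, phi (p i) - ∑ i ∈ s, phi (q i)|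
      ≤ s.card * phi δ + 2 / (Real.exp 1 * Real.log 2) * (1 / δ) * ∑ i ∈ s, |p i - q i| :=
  calc |∑ i ∈ s, phi (p i) - ∑ i ∈ s, phi (q i)|
      ≤ ∑ i ∈ s, |phi (p i) - phi (q i)| := by
        rw [← Finset.sum_sub_distrib]
        exact Finset.abs_sum_le_sum_abs _ _
    _ ≤ ∑ i ∈ s, (phi δ + 2 / (Real.exp 1 * Real.log 2) * (1 / δ) * |p i - q i|) :=
        Finset.sum_le_sum fun i hi => abs_phi_sub_phi_le (hp i hi) (hq i hi) hδ₀ hδ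
    _ = _ := by
        rw [Finset.sum_add_distrib, Finset.sum_const, nsmul_eq_mul, Finset.mul_sum]

lemma abs_tsum_sub_tsum_le_add {ι : Type*} {f g : ι → ℝ} (s : Finset ι) {ε : ℝ}
    (hf : Summable f) (hg : Summable g)
    (hf₀ : ∀ i ∉ s, 0 ≤ f i) (hg₀ : ∀ i ∉ s, 0 ≤ g i)
    (hfε : ∑' i : {i // i ∉ s}, f i ≤ ε) (hgε : ∑' i : {i // i ∉ s}, g i ≤ ε) :
    |∑' i, f i - ∑' i, g i| ≤ |∑ i ∈ s, f i - ∑ i ∈ s, g i| + ε := by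
  rw [← hf.sum_add_tsum_subtype_compl s, ← hg.sum_add_tsum_subtype_compl s, add_sub_add_comm]
  refine (abs_add_le _ _).trans (add_le_add_right ?_ _)
  exact abs_sub_le_of_nonneg_of_le (tsum_nonneg fun i => hf₀ i i.2) hfε
    (tsum_nonneg fun i => hg₀ i i.2) hgε

lemma mem_Icc_zero_one_of_hasSum_one {ι : Type*} {p : ι → ℝ} (hp₀ : ∀ i, 0 ≤ p i)
    (hp₁ : HasSum p 1) (i : ι) : p i ∈ Set.Icc 0 1 :=
  ⟨hp₀ i, le_hasSum hp₁ i fun j _ => hp₀ j⟩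

theorem local_entropy_comparison_general {Y : Type*} {p q : Y → ℝ}
    (hp : ∀ y, p y ∈ Set.Icc 0 1) (hq : ∀ y, q y ∈ Set.Icc 0 1)
    (hpq : Summable fun y => |p y - q y|)
    (hHp : Summable fun y => phi (p y)) (hHq : Summable fun y => phi (q y))
    {ε : ℝ} {M : ℕ} {F : Finset Y} (hF : F.card ≤ M)
    (htailp : ∑' y : {y // y ∉ F}, phi (p y) ≤ ε) (htailq : ∑' y : {y // y ∉ F}, phi (q y) ≤ ε)
    {δ : ℝ} (hδ₀ : 0 < δ) (hδ : δ ≤ Real.exp (-1 / 2)) :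
    |∑' y, phi (p y) - ∑' y, phi (q y)|
      ≤ ε + M * phi δ + 2 / (Real.exp 1 * Real.log 2) * (1 / δ) * ∑' y, |p y - q y| := by
  have hphiδ : 0 ≤ phi δ := phi_nonneg ⟨hδ₀.le, hδ.trans (Real.exp_le_one_iff.2 (by norm_num))⟩
  calc |∑' y, phi (p y) - ∑' y, phi (q y)|
      ≤ |∑ y ∈ F, phi (p y) - ∑ y ∈ F, phi (q y)| + ε :=
        abs_tsum_sub_tsum_le_add F hHp hHq (fun y _ => phi_nonneg (hp y))
          (fun y _ => phi_nonneg (hq y)) htailp htailq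
    _ ≤ F.card * phi δ
          + 2 / (Real.exp 1 * Real.log 2) * (1 / δ) * ∑ y ∈ F, |p y - q y| + ε := by
        gcongr
        exact abs_sum_phi_sub_sum_phi_le (fun y _ => hp y) (fun y _ => hq y) hδ₀ hδ
    _ ≤ M * phi δ + 2 / (Real.exp 1 * Real.log 2) * (1 / δ) * ∑' y, |p y - q y| + ε := by
        gcongr
        exact hpq.sum_le_tsum F fun y _ => abs_nonneg _
    _ = _ := by ring

/-- Local entropy comparison lemma: for probability distributions `p`, `q` on a countable set
with finite entropies and common tightness witness `F` (with `|F| ≤ M`, tail entropies `< ε`),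
for every `0 < δ ≤ 1/2`,
`|H(p) − H(q)| ≤ 2ε + M·φ(δ) + (2/(e·ln 2))·(1/δ)·‖p − q‖₁`. -/
theorem local_entropy_comparison
    {Y : Type*} [Countable Y] (p q : Y → ℝ)
    (hp0 : ∀ y, 0 ≤ p y) (hp1 : HasSum p 1)
    (hq0 : ∀ y, 0 ≤ q y) (hq1 : HasSum q 1)
    (hHp : Summable fun y : Y => phi (p y))
    (hHq : Summable fun y : Y => phi (q y))
    (ε : ℝ) (hε : 0 < ε) (M : ℕ) (F : Finset Y) (hF : F.card ≤ M)
    (htailp : (∑' y : {y : Y // y ∉ F}, phi (p y)) < ε)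
    (htailq : (∑' y : {y : Y // y ∉ F}, phi (q y)) < ε)
    (δ : ℝ) (hδ0 : 0 < δ) (hδ : δ ≤ 1/2) :
    |(∑' y : Y, phi (p y)) - ∑' y : Y, phi (q y)|
      ≤ 2 * ε + M * phi δ
        + (2 / (Real.exp 1 * Real.log 2)) * (1 / δ) * ∑' y : Y, |p y - q y| := by
  have h := local_entropy_comparison_general (mem_Icc_zero_one_of_hasSum_one hp0 hp1)
    (mem_Icc_zero_one_of_hasSum_one hq0 hq1) (hp1.summable.sub hq1.summable).abs hHp hHq hF
    htailp.le htailq.le hδ0 (hδ.trans (by linarith [Real.add_one_le_exp (-1 / 2)]))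
  linarith
end
end
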